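/- arXiv:1901.10286 — 2 statements merged into one kernel-verified Lean document; each statement's English description precedes it below -/
import Mathlib

section
/- For every positive integer g, the g-fold star-product of the Reed–Solomon code RS_k(α) with itself equals the Reed–Solomon code RS_{min{g(k-1)+1, n}}(α), i.e., span{v_1 ⋆ ⋯ ⋆ v_g : v_1,…,v_g ∈ RS_k(α)} = RS_{min{g(k-1)+1, n}}(α). -/
/-!
A product of `g` polynomials of degree at most `k - 1` has degree at most `g (k - 1)`, so every
star-product lies in `RS_{g(k-1)+1}(α)`. Conversely, `RS_{g(k-1)+1}(α)` is spanned by the evaluation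
vectors of the monomials `z ^ a` with `a ≤ g (k - 1)`; writing `a` as a sum of `g` naturals that are
at most `k - 1` (`exists_bounded_summands`) exhibits each such vector as a star-product. Finally,
`RS_m(α) = RS_{min{m,n}}(α)` (`RSCode_min`), as Lagrange interpolation at the `n` distinct points
shows that `RS_n(α)` is the whole space.
-/

/-- The Reed–Solomon code `RS_k(α)`: evaluation vectors of polynomials of degree `< k`
at the points `α_1, …, α_n`. -/
noncomputable def RSCode (F : Type*) [Field F] {n : ℕ} (k : ℕ) (α : Fin n → F) :
    Submodule F (Fin n → F) :=
  (Polynomial.degreeLT F k).map (Polynomial.aeval α).toLinearMap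

theorem mem_RSCode_iff {F : Type*} [Field F] {n k : ℕ} {α v : Fin n → F} :
    v ∈ RSCode F k α ↔ ∃ p : Polynomial F, p.degree < k ∧ ∀ j, p.eval (α j) = v j := by
  simp only [RSCode, Submodule.mem_map, Polynomial.mem_degreeLT, AlgHom.toLinearMap_apply]
  refine exists_congr fun p => and_congr_right fun _ => ?_
  simp [funext_iff]

theorem RSCode_mono {F : Type*} [Field F] {n k l : ℕ} (h : k ≤ l) (α : Fin n → F) :
    RSCode F k α ≤ RSCode F l α :=
  Submodule.map_mono (Polynomial.degreeLT_mono h)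

/-- Reed–Solomon codes stop growing at dimension `n`, by Lagrange interpolation. -/
theorem RSCode_min {F : Type*} [Field F] {n : ℕ} (m : ℕ) {α : Fin n → F}
    (hα : Function.Injective α) : RSCode F (min m n) α = RSCode F m α := by
  refine le_antisymm (RSCode_mono (min_le_left _ _) α) ?_
  rcases le_total m n with h | h
  · rw [min_eq_left h]
  · rw [min_eq_right h]
    intro v _
    refine mem_RSCode_iff.2 ⟨Lagrange.interpolate Finset.univ α v, ?_, fun j => ?_⟩
    · simpa using Lagrange.degree_interpolate_lt (s := Finset.univ) v hα.injOn
    · exact Lagrange.eval_interpolate_at_node v hα.injOn (Finset.mem_univ j)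

theorem exists_bounded_summands (m : ℕ) :
    ∀ g a : ℕ, a ≤ g * m → ∃ b : Fin g → ℕ, (∀ i, b i ≤ m) ∧ ∑ i, b i = a
  | 0, a, h => ⟨fun _ => 0, fun _ => Nat.zero_le _, by simp at h ⊢; exact h.symm⟩
  | g + 1, a, h => by
    rw [Nat.succ_mul] at h
    obtain ⟨b, hb, hs⟩ := exists_bounded_summands m g (a - min a m) (by omega)
    refine ⟨Fin.cons (min a m) b, fun i => ?_, ?_⟩
    · refine Fin.cases ?_ (fun i => ?_) i
      · simp
      · simpa using hb i
    · rw [Fin.sum_cons, hs]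
      omega

/-- For every positive integer `g`, the `g`-fold star-product of `RS_k(α)` with itself,
i.e. the span of all coordinatewise products `v_1 ⋆ ⋯ ⋆ v_g` with `v_i ∈ RS_k(α)`, equals
the Reed–Solomon code `RS_{min{g(k-1)+1, n}}(α)`. -/
theorem rs_star_product (F : Type*) [Field F] [Fintype F] (n k g : ℕ)
    (hn : n < Fintype.card F) (α : Fin n → F) (hα : Function.Injective α)
    (hα0 : ∀ j, α j ≠ 0) (hk1 : 1 ≤ k) (hkn : k ≤ n) (hg : 1 ≤ g) :
    Submodule.span F {w : Fin n → F |
        ∃ v : Fin g → (Fin n → F), (∀ i, v i ∈ RSCode F k α) ∧ w = fun j => ∏ i, v i j}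
      = RSCode F (min (g * (k - 1) + 1) n) α := by
  classical
  rw [RSCode_min _ hα]
  apply le_antisymm
  · rw [Submodule.span_le]
    rintro w ⟨v, hv, rfl⟩
    choose p hp hpv using fun i => mem_RSCode_iff.1 (hv i)
    refine mem_RSCode_iff.2 ⟨∏ i, p i, ?_, fun j => ?_⟩
    · have hnat : ∀ i, (p i).natDegree ≤ k - 1 := fun i =>
        Polynomial.natDegree_le_iff_coeff_eq_zero.2 fun N hN =>
          Polynomial.coeff_eq_zero_of_degree_lt
            ((hp i).trans_le (by exact_mod_cast (by omega : k ≤ N)))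
      have hsum : (∏ i, p i).natDegree ≤ g * (k - 1) :=
        (Polynomial.natDegree_prod_le _ _).trans
          ((Finset.sum_le_sum fun i _ => hnat i).trans (by simp))
      exact (Polynomial.natDegree_le_iff_degree_le.1 hsum).trans_lt
        (by exact_mod_cast Nat.lt_succ_self _)
    · simp only [Polynomial.eval_prod, hpv]
  · rw [RSCode, Polynomial.degreeLT_eq_span_X_pow, Submodule.map_span, Submodule.span_le]
    rintro _ ⟨q, hq, rfl⟩
    obtain ⟨a, ha, rfl⟩ := Finset.mem_image.1 (Finset.mem_coe.1 hq)
    obtain ⟨b, hb, rfl⟩ := exists_bounded_summands (k - 1) g a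
      (Nat.lt_succ_iff.1 (Finset.mem_range.1 ha))
    refine Submodule.subset_span ⟨fun i j => α j ^ b i, fun i => ?_, ?_⟩
    · refine mem_RSCode_iff.2 ⟨Polynomial.X ^ b i, ?_, fun j => by simp⟩
      rw [Polynomial.degree_X_pow]
      have := hb i
      exact_mod_cast (by omega : b i < k)
    · ext j
      simp [Finset.prod_pow_eq_pow_sum]
end

section
/- There exists an n×n binary (0/1) matrix Λ such that every column of Λ has exactly k̃ ones and, for every row of Λ, the support of that row is an information set for RS_{k̃}(α) (i.e., it has size k̃ and the projection of RS_{k̃}(α) onto it is bijective). In other words, a PPC achievable rate matrix with parameters (κ,ν) = (k̃, n) always exists for the decoding code RS_{k̃}(α). -/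
/-- Reed–Solomon codes are MDS: any `k` coordinates form an information set. -/
theorem RSCode_bijective_restrict {F : Type*} [Field F] {n k : ℕ} {α : Fin n → F}
    (hα : Function.Injective α) (S : Finset (Fin n)) (hS : S.card = k) :
    Function.Bijective
      (fun c : RSCode F k α => fun j : {j : Fin n // j ∈ S} => (c : Fin n → F) j) := by
  have aeval_apply (p : Polynomial F) (j : Fin n) :
      Polynomial.aeval α p j = p.eval (α j) := by
    simp
  constructor
  · rintro ⟨_, p, hp, rfl⟩ ⟨_, q, hq, rfl⟩ h
    have hpq : p = q := by
      refine Polynomial.eq_of_degrees_lt_of_eval_index_eq S hα.injOn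
        (hS ▸ Polynomial.mem_degreeLT.1 hp) (hS ▸ Polynomial.mem_degreeLT.1 hq) fun j hj => ?_
      have := congrFun h ⟨j, hj⟩
      simpa [aeval_apply] using this
    subst hpq
    rfl
  · intro y
    let r : Fin n → F := fun j => if h : j ∈ S then y ⟨j, h⟩ else 0
    refine ⟨⟨_, Lagrange.interpolate S α r, Polynomial.mem_degreeLT.2
      (hS ▸ Lagrange.degree_interpolate_lt r hα.injOn), rfl⟩, ?_⟩
    funext ⟨j, hj⟩
    refine (aeval_apply _ j).trans ?_
    rw [Lagrange.eval_interpolate_at_node r hα.injOn hj]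
    exact dif_pos hj

theorem card_filter_perm_val_lt {n k : ℕ} (hk : k ≤ n) (e : Equiv.Perm (Fin n)) :
    (Finset.univ.filter (fun j => (e j).val < k)).card = k := by
  have h : (Finset.univ.filter (fun j => (e j).val < k)).card =
      (Finset.univ.filter (fun j : Fin n => j.val < k)).card :=
    Finset.card_equiv e (by simp)
  rw [h, Fin.card_filter_val_lt, min_eq_right hk]

/-- A PPC achievable rate matrix with parameters `(κ,ν) = (k̃, n)` always exists for the
decoding code `RS_{k̃}(α)`: there is an `n×n` binary matrix `Λ` such that every column of
`Λ` has exactly `k̃` ones and, for every row of `Λ`, the support of that row is an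
information set for `RS_{k̃}(α)` (it has size `k̃` and the projection of `RS_{k̃}(α)` onto
it is bijective). -/
theorem ppc_achievable_rate_matrix_exists (F : Type*) [Field F] [Fintype F] (n kt : ℕ)
    (hn : n < Fintype.card F) (α : Fin n → F) (hα : Function.Injective α)
    (hα0 : ∀ j, α j ≠ 0) (hkt1 : 1 ≤ kt) (hktn : kt ≤ n) :
    ∃ Λ : Matrix (Fin n) (Fin n) Bool,
      (∀ j, (Finset.univ.filter (fun i => Λ i j = true)).card = kt) ∧
      (∀ i, (Finset.univ.filter (fun j => Λ i j = true)).card = kt ∧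
        Function.Bijective
          (fun c : RSCode F kt α =>
            fun j : {j : Fin n // j ∈ Finset.univ.filter (fun j => Λ i j = true)} =>
              (c : Fin n → F) j)) := by
  have : NeZero n := ⟨by omega⟩
  have row (i : Fin n) : (Finset.univ.filter (fun j : Fin n => (i + j).val < kt)).card = kt :=
    card_filter_perm_val_lt hktn (Equiv.addLeft i)
  have col (j : Fin n) : (Finset.univ.filter (fun i : Fin n => (i + j).val < kt)).card = kt :=
    card_filter_perm_val_lt hktn (Equiv.addRight j)
  refine ⟨fun i j => decide ((i + j).val < kt), fun j => ?_, fun i => ?_⟩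
  · simpa using col j
  · have h : (Finset.univ.filter
        (fun j : Fin n => decide ((i + j).val < kt) = true)).card = kt := by
      simpa using row i
    exact ⟨h, RSCode_bijective_restrict hα _ h⟩
end
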